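/- Let n ≥ 2, A the Cartan matrix of type C_n, and ι an admissible sequence adapted to A. Then the type C boxes satisfy: (1) B^C_s(j+1) = B^C_s(j) − β_{s+P(j),j} for 1 ≤ j ≤ n−1 and s ≥ 1 − P(j); (2) B^C_s(n̄) = B^C_s(n) − 2β_{s+P(n),n} for s ≥ 1 − P(n); (3) B^C_s(ovl(j−1)) = B^C_s(j̄) − β_{s+P(j−1)+n−j+1, j−1} for 2 ≤ j ≤ n and s ≥ j − P(j−1) − n; (4) B^C_{l+1}(ovl(n+1)) + B^C_l(n̄) = B^C_l(ovl(n+1)) − β_{l+P(n), n} for l ≥ 1 − P(n). -/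

import Mathlib

noncomputable section

/-- The coordinate linear form `x_k` (as a coefficient vector). -/
def xc (k : ℕ) : ℕ → ℚ := fun l => if l = k then 1 else 0

/-- Cartan matrix of type `A_n`. -/
def cartanA (_n : ℕ) (i j : ℕ) : ℤ :=
  if i = j then 2 else if i + 1 = j ∨ j + 1 = i then -1 else 0

/-- Cartan matrix of type `B_n`. -/
def cartanB (n : ℕ) (i j : ℕ) : ℤ :=
  if i = j then 2
  else if i = n ∧ j = n - 1 then -2
  else if i + 1 = j ∨ j + 1 = i then -1 else 0

/-- Cartan matrix of type `C_n`. -/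
def cartanC (n : ℕ) (i j : ℕ) : ℤ :=
  if i = j then 2
  else if i = n - 1 ∧ j = n then -2
  else if i + 1 = j ∨ j + 1 = i then -1 else 0

/-- Cartan matrix of type `D_n`. -/
def cartanD (n : ℕ) (i j : ℕ) : ℤ :=
  if i = j then 2
  else if (i = n - 1 ∧ j = n) ∨ (i = n ∧ j = n - 1) then 0
  else if (i + 1 = j ∨ j + 1 = i) ∨ (i = n ∧ j = n - 2) ∨ (i = n - 2 ∧ j = n) then -1
  else 0

/-- `ι` (with positions indexed by `k ≥ 1`) takes values in `{1,…,n}`, has no two equal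
consecutive entries, and every index occurs infinitely often. -/
def Admissible (n : ℕ) (ι : ℕ → ℕ) : Prop :=
  (∀ k, 1 ≤ k → 1 ≤ ι k ∧ ι k ≤ n) ∧
  (∀ k, 1 ≤ k → ι k ≠ ι (k + 1)) ∧
  (∀ i, 1 ≤ i → i ≤ n → ∀ N, ∃ k, N ≤ k ∧ ι k = i)

/-- `k^+`: the next position after `k` carrying the same letter. -/
def kplus (ι : ℕ → ℕ) (k : ℕ) : ℕ := sInf {l | k < l ∧ ι l = ι k}

/-- `k^-`: the previous position (`≥ 1`) carrying the same letter, `0` if none. -/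
def kminus (ι : ℕ → ℕ) (k : ℕ) : ℕ := sSup {l | 0 < l ∧ l < k ∧ ι l = ι k}

/-- The linear form `β_k` (with `β_0 = 0`). -/
def beta (A : ℕ → ℕ → ℤ) (ι : ℕ → ℕ) (k : ℕ) : ℕ → ℚ :=
  if k = 0 then 0
  else xc k + (∑ j ∈ Finset.Ioo k (kplus ι k), (A (ι k) (ι j) : ℚ) • xc j) + xc (kplus ι k)

/-- The piecewise-linear operator `S_k`. -/
def Sop (A : ℕ → ℕ → ℤ) (ι : ℕ → ℕ) (k : ℕ) (φ : ℕ → ℚ) : ℕ → ℚ :=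
  if 0 < φ k then φ - φ k • beta A ι k
  else φ - φ k • beta A ι (kminus ι k)

/-- Membership in `Ξ_ι`: forms obtained from some `x_{j_0}` by finitely many operators `S_k`. -/
inductive XiMem (A : ℕ → ℕ → ℤ) (ι : ℕ → ℕ) : (ℕ → ℚ) → Prop
  | base (k : ℕ) (hk : 1 ≤ k) : XiMem A ι (xc k)
  | step (k : ℕ) (hk : 1 ≤ k) (φ : ℕ → ℚ) (h : XiMem A ι φ) : XiMem A ι (Sop A ι k φ)

/-- The set `Ξ_ι`. -/
def Xi (A : ℕ → ℕ → ℤ) (ι : ℕ → ℕ) : Set (ℕ → ℚ) := { φ | XiMem A ι φ }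

/-- Forms obtained from a set `g` of generators by finitely many operators `S_k`. -/
inductive XiMemFrom (A : ℕ → ℕ → ℤ) (ι : ℕ → ℕ) (g : Set (ℕ → ℚ)) : (ℕ → ℚ) → Prop
  | base (φ : ℕ → ℚ) (h : φ ∈ g) : XiMemFrom A ι g φ
  | step (k : ℕ) (hk : 1 ≤ k) (φ : ℕ → ℚ) (h : XiMemFrom A ι g φ) :
      XiMemFrom A ι g (Sop A ι k φ)

/-- `ι` is adapted to the Cartan matrix `A`: for `i ≠ j` with `a_{i,j} ≠ 0`, consecutive
members of the subsequence of `ι` consisting of the letters `i`, `j` are distinct. -/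
def Adapted (n : ℕ) (A : ℕ → ℕ → ℤ) (ι : ℕ → ℕ) : Prop :=
  ∀ i j, 1 ≤ i → i ≤ n → 1 ≤ j → j ≤ n → i ≠ j → A i j ≠ 0 →
    ∀ k l, 1 ≤ k → k < l → (ι k = i ∨ ι k = j) → (ι l = i ∨ ι l = j) →
      (∀ m, k < m → m < l → ι m ≠ i ∧ ι m ≠ j) → ι k ≠ ι l

/-- Position of the first occurrence of the letter `i` in `ι`. -/
def firstOcc (ι : ℕ → ℕ) (i : ℕ) : ℕ := sInf {k | 1 ≤ k ∧ ι k = i}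

/-- `p_{i,j} = 1` iff the first occurrence of `i` precedes the first occurrence of `j`. -/
def pval (ι : ℕ → ℕ) (i j : ℕ) : ℕ := if firstOcc ι i < firstOcc ι j then 1 else 0

/-- The function `P(k)` for types A, B, C (and `P(k) = 0` for `k > n`, `k ≤ 1`). -/
def PABC (ι : ℕ → ℕ) (n k : ℕ) : ℕ :=
  if k ≤ n then ∑ t ∈ Finset.Icc 2 k, pval ι t (t - 1) else 0

/-- The function `P(k)` for type D. -/
def PD (ι : ℕ → ℕ) (n k : ℕ) : ℕ :=
  if k = n then (∑ t ∈ Finset.Icc 2 (n - 2), pval ι t (t - 1)) + pval ι n (n - 2)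
  else if k ≤ n then ∑ t ∈ Finset.Icc 2 k, pval ι t (t - 1) else 0

/-- `occPos ι j s`: the position of the `s`-th occurrence of the letter `j` in `ι`
(`0` for `s = 0`). -/
def occPos (ι : ℕ → ℕ) (j : ℕ) : ℕ → ℕ
  | 0 => 0
  | s + 1 => sInf {k | occPos ι j s < k ∧ ι k = j}

/-- The double-indexed coordinate form `x_{s,j}`, with the conventions
`x_{s,0} = x_{s,n+1} = 0` and `x_{s,j} = 0` for `s ≤ 0`. -/
def xsj (ι : ℕ → ℕ) (n : ℕ) (s : ℤ) (j : ℕ) : ℕ → ℚ :=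
  if 1 ≤ s ∧ 1 ≤ j ∧ j ≤ n then xc (occPos ι j s.toNat) else 0

/-- The double-indexed form `β_{s,j}`. -/
def betasj (A : ℕ → ℕ → ℤ) (ι : ℕ → ℕ) (s : ℤ) (j : ℕ) : ℕ → ℚ :=
  beta A ι (occPos ι j s.toNat)

/-- The double-indexed operator `S_{m,j}`. -/
def Ssj (A : ℕ → ℕ → ℤ) (ι : ℕ → ℕ) (m j : ℕ) (φ : ℕ → ℚ) : ℕ → ℚ :=
  Sop A ι (occPos ι j m) φ

/- Entries of the ordered sets `J_X` are encoded as natural numbers: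
an unbarred entry `j ∈ {1,…,n}` is encoded as `j`, a barred entry `j̄` is
encoded as `2n+1-j` (so that `n̄ = n+1, …, 1̄ = 2n` and the total order of
`J_B = J_C` is the numerical order), and the extra symbol `ovl(n+1)` of
types C and D is encoded as `0`. -/

/-- The box of type A. -/
def boxA (ι : ℕ → ℕ) (n : ℕ) (s : ℤ) (j : ℕ) : ℕ → ℚ :=
  xsj ι n (s + (PABC ι n j : ℤ)) j - xsj ι n (s + (PABC ι n (j - 1) : ℤ) + 1) (j - 1)

/-- The box of type B. -/
def boxB (ι : ℕ → ℕ) (n : ℕ) (s : ℤ) (e : ℕ) : ℕ → ℚ :=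
  if e ≤ n then
    xsj ι n (s + (PABC ι n e : ℤ)) e - xsj ι n (s + (PABC ι n (e - 1) : ℤ) + 1) (e - 1)
  else
    xsj ι n (s + (PABC ι n (2 * n - e) : ℤ) + (n : ℤ) - ((2 * n + 1 - e : ℕ) : ℤ) + 1)
        (2 * n - e)
      - xsj ι n (s + (PABC ι n (2 * n + 1 - e) : ℤ) + (n : ℤ) - ((2 * n + 1 - e : ℕ) : ℤ) + 1)
          (2 * n + 1 - e)

/-- The box of type C (`ovl(n+1)` encoded as `0`). -/
def boxC (ι : ℕ → ℕ) (n : ℕ) (s : ℤ) (e : ℕ) : ℕ → ℚ :=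
  if e = 0 then xsj ι n (s + (PABC ι n n : ℤ)) n
  else if e < n then
    xsj ι n (s + (PABC ι n e : ℤ)) e - xsj ι n (s + (PABC ι n (e - 1) : ℤ) + 1) (e - 1)
  else if e = n then
    (2 : ℚ) • xsj ι n (s + (PABC ι n n : ℤ)) n
      - xsj ι n (s + (PABC ι n (n - 1) : ℤ) + 1) (n - 1)
  else if e = n + 1 then
    xsj ι n (s + (PABC ι n (n - 1) : ℤ) + 1) (n - 1)
      - (2 : ℚ) • xsj ι n (s + (PABC ι n n : ℤ) + 1) n
  else
    xsj ι n (s + (PABC ι n (2 * n - e) : ℤ) + (n : ℤ) - ((2 * n + 1 - e : ℕ) : ℤ) + 1)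
        (2 * n - e)
      - xsj ι n (s + (PABC ι n (2 * n + 1 - e) : ℤ) + (n : ℤ) - ((2 * n + 1 - e : ℕ) : ℤ) + 1)
          (2 * n + 1 - e)

/-- The box of type D (`ovl(n+1)` encoded as `0`, `n̄` as `n+1`, `ovl(n-1)` as `n+2`). -/
def boxD (ι : ℕ → ℕ) (n : ℕ) (s : ℤ) (e : ℕ) : ℕ → ℚ :=
  if e = 0 then xsj ι n (s + (PD ι n n : ℤ)) n
  else if e ≤ n - 2 then
    xsj ι n (s + (PD ι n e : ℤ)) e - xsj ι n (s + (PD ι n (e - 1) : ℤ) + 1) (e - 1)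
  else if e = n - 1 then
    xsj ι n (s + (PD ι n (n - 1) : ℤ)) (n - 1) + xsj ι n (s + (PD ι n n : ℤ)) n
      - xsj ι n (s + (PD ι n (n - 2) : ℤ) + 1) (n - 2)
  else if e = n then
    xsj ι n (s + (PD ι n n : ℤ)) n - xsj ι n (s + (PD ι n (n - 1) : ℤ) + 1) (n - 1)
  else if e = n + 1 then
    xsj ι n (s + (PD ι n (n - 1) : ℤ)) (n - 1) - xsj ι n (s + (PD ι n n : ℤ) + 1) n
  else if e = n + 2 then
    xsj ι n (s + (PD ι n (n - 2) : ℤ) + 1) (n - 2)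
      - xsj ι n (s + (PD ι n (n - 1) : ℤ) + 1) (n - 1)
      - xsj ι n (s + (PD ι n n : ℤ) + 1) n
  else
    xsj ι n (s + (PD ι n (2 * n - e) : ℤ) + (n : ℤ) - ((2 * n + 1 - e : ℕ) : ℤ)) (2 * n - e)
      - xsj ι n (s + (PD ι n (2 * n + 1 - e) : ℤ) + (n : ℤ) - ((2 * n + 1 - e : ℕ) : ℤ))
          (2 * n + 1 - e)

/-- The column tableau `[j_1,…,j_k]_s = Σ_{i=1}^k box_{s+k-i}(j_i)`. -/
def tab (box : ℤ → ℕ → ℕ → ℚ) (s : ℤ) (k : ℕ) (j : ℕ → ℕ) : ℕ → ℚ :=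
  ∑ i ∈ Finset.Icc 1 k, box (s + (k : ℤ) - (i : ℤ)) (j i)

/-- The set `Tab_{A,ι}`. -/
def TabA (ι : ℕ → ℕ) (n : ℕ) : Set (ℕ → ℚ) :=
  { T | ∃ (k : ℕ) (s : ℤ) (j : ℕ → ℕ),
      1 ≤ k ∧ k ≤ n ∧
      (∀ i, 1 ≤ i → i ≤ k → 1 ≤ j i ∧ j i ≤ n + 1) ∧
      (∀ i, 1 ≤ i → i < k → j i < j (i + 1)) ∧
      1 - (PABC ι n k : ℤ) ≤ s ∧
      T = tab (boxA ι n) s k j }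

/-- `|·|` on encoded entries of `J_B = J_C`. -/
def absJ (n e : ℕ) : ℕ := if e ≤ n then e else 2 * n + 1 - e

/-- The set `Tab_{B,ι}`. -/
def TabB (ι : ℕ → ℕ) (n : ℕ) : Set (ℕ → ℚ) :=
  { T | ∃ (k : ℕ) (s : ℤ) (j : ℕ → ℕ),
      1 ≤ k ∧ k ≤ n ∧
      (∀ i, 1 ≤ i → i ≤ k → 1 ≤ j i ∧ j i ≤ 2 * n) ∧
      (∀ i, 1 ≤ i → i < k → j i < j (i + 1)) ∧
      (k = n → ∀ l m, 1 ≤ l → l < m → m ≤ k → absJ n (j l) ≠ absJ n (j m)) ∧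
      1 - (PABC ι n k : ℤ) ≤ s ∧
      T = tab (boxB ι n) s k j }

/-- Defining conditions of `Tab_{C,ι}` on the data `(k,s,j)`. -/
def TabCcond (ι : ℕ → ℕ) (n : ℕ) (k : ℕ) (s : ℤ) (j : ℕ → ℕ) : Prop :=
  (1 ≤ k ∧ k ≤ n - 1 ∧
    (∀ i, 1 ≤ i → i ≤ k → 1 ≤ j i ∧ j i ≤ 2 * n) ∧
    (∀ i, 1 ≤ i → i < k → j i < j (i + 1)) ∧
    1 - (PABC ι n k : ℤ) ≤ s)
  ∨
  (j 1 = 0 ∧ 1 ≤ k ∧ k ≤ n + 1 ∧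
    (∀ i, 2 ≤ i → i ≤ k → n + 1 ≤ j i ∧ j i ≤ 2 * n) ∧
    (∀ i, 2 ≤ i → i < k → j i < j (i + 1)) ∧
    1 - (PABC ι n n : ℤ) ≤ s)

/-- The set `Tab_{C,ι}`. -/
def TabC (ι : ℕ → ℕ) (n : ℕ) : Set (ℕ → ℚ) :=
  { T | ∃ k s j, TabCcond ι n k s j ∧ T = tab (boxC ι n) s k j }

/-- The partial order on (encoded) `J_D`: `a ≤ b` iff `a = b`, or `a < b` numerically and
`(a,b)` is not the incomparable pair `(n, n̄)`. -/
def leD (n a b : ℕ) : Prop := a = b ∨ (a < b ∧ ¬(a = n ∧ b = n + 1))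

/-- Defining conditions of `Tab_{D,ι}` on the data `(k,s,j)`. -/
def TabDcond (ι : ℕ → ℕ) (n : ℕ) (k : ℕ) (s : ℤ) (j : ℕ → ℕ) : Prop :=
  (1 ≤ k ∧ k ≤ n - 2 ∧
    (∀ i, 1 ≤ i → i ≤ k → 1 ≤ j i ∧ j i ≤ 2 * n) ∧
    (∀ i, 1 ≤ i → i < k → ¬ leD n (j (i + 1)) (j i)) ∧
    1 - (PD ι n k : ℤ) ≤ s)
  ∨
  (j 1 = 0 ∧ 1 ≤ k ∧ k ≤ n + 1 ∧
    (∀ i, 2 ≤ i → i ≤ k → n + 1 ≤ j i ∧ j i ≤ 2 * n) ∧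
    (∀ i, 2 ≤ i → i < k → j i < j (i + 1)) ∧
    (k % 2 = 0 → 1 - (PD ι n (n - 1) : ℤ) ≤ s) ∧
    (k % 2 = 1 → 1 - (PD ι n n : ℤ) ≤ s))

/-- The set `Tab_{D,ι}`. -/
def TabD (ι : ℕ → ℕ) (n : ℕ) : Set (ℕ → ℚ) :=
  { T | ∃ k s j, TabDcond ι n k s j ∧ T = tab (boxD ι n) s k j }

end

/-!
When two letters `i`, `j` alternate in `ι`, exactly one `j` occurs between the `s`-th and the
`(s+1)`-th occurrence of `i`, and it is the `(s + p_{j,i})`-th one. Hence `β_{s,i}` equals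
`x_{s,i} + x_{s+1,i} + ∑_{j ≠ i} a_{i,j} x_{s + p_{j,i}, j}` for every matrix to which `ι` is
adapted. In the coordinates `y_{m,j} := x_{m+P(j),j}` the numbers `p_{j,i}` disappear: for a
tridiagonal matrix,
`β_{m+P(j),j} = y_{m,j} + y_{m+1,j} + a_{j,j-1} y_{m+1,j-1} + a_{j,j+1} y_{m,j+1}`.
The boxes become combinations of at most two `y`s with no mention of `P`, and the coefficient `2`
in the boxes of `n` and `n̄` is `-a_{n-1,n}`, so comparing coefficients gives
the relations.
-/

open Filter Finset

section Separation

variable {ι : ℕ → ℕ} {i j : ℕ}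

/-- The letter `i` separates the letter `j` in `ι`: an occurrence of `i` lies strictly between any
two occurrences of `j`. Two letters alternate in `ι` when each separates the other. As in
`Admissible`, position `0` is not part of the sequence. -/
def Separates (ι : ℕ → ℕ) (i j : ℕ) : Prop :=
  ∀ ⦃k l⦄, 1 ≤ k → k < l → ι k = j → ι l = j → ∃ m ∈ Ioo k l, ι m = i

lemma separates_of_exists_or
    (h : ∀ ⦃k l⦄, 1 ≤ k → k < l → ι k = j → ι l = j → ∃ m ∈ Ioo k l, ι m = i ∨ ι m = j) :
    Separates ι i j := by
  intro k l hk hkl hιk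
  induction l using Nat.strong_induction_on with
  | _ l ih =>
    intro hιl
    obtain ⟨m, hm, hmi | hmj⟩ := h hk hkl hιk hιl
    · exact ⟨m, hm, hmi⟩
    · have hm' := mem_Ioo.1 hm
      obtain ⟨m', hmem, hm'i⟩ := ih m hm'.2 hm'.1 hmj
      exact ⟨m', Ioo_subset_Ioo_right hm'.2.le hmem, hm'i⟩

lemma Adapted.separates {n : ℕ} {A : ℕ → ℕ → ℤ} (h : Adapted n A ι) (hi : i ∈ Icc 1 n)
    (hj : j ∈ Icc 1 n) (hij : i ≠ j) (hA : A i j ≠ 0) : Separates ι i j ∧ Separates ι j i := by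
  rw [mem_Icc] at hi hj
  have exists_between {a k l : ℕ} (ha : a = i ∨ a = j) (hk : 1 ≤ k) (hkl : k < l) (hιk : ι k = a)
      (hιl : ι l = a) : ∃ m ∈ Ioo k l, ι m = i ∨ ι m = j := by
    by_contra! hnone
    exact h i j hi.1 hi.2 hj.1 hj.2 hij hA k l hk hkl (hιk ▸ ha) (hιl ▸ ha)
      (fun m hkm hml => hnone m (mem_Ioo.2 ⟨hkm, hml⟩)) (hιk.trans hιl.symm)
  refine ⟨separates_of_exists_or fun k l => exists_between (.inr rfl),
    separates_of_exists_or fun k l hk hkl hιk hιl => ?_⟩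
  simpa only [or_comm] using exists_between (.inl rfl) hk hkl hιk hιl

end Separation

section Occurrences

variable {ι : ℕ → ℕ} {i j : ℕ}

lemma occPos_succ_spec (hi : ∃ᶠ k in atTop, ι k = i) (s : ℕ) :
    occPos ι i s < occPos ι i (s + 1) ∧ ι (occPos ι i (s + 1)) = i :=
  Nat.sInf_mem (frequently_atTop'.1 hi (occPos ι i s))

lemma occPos_lt_succ (hi : ∃ᶠ k in atTop, ι k = i) (s : ℕ) : occPos ι i s < occPos ι i (s + 1) :=
  (occPos_succ_spec hi s).1

lemma apply_occPos_succ (hi : ∃ᶠ k in atTop, ι k = i) (s : ℕ) : ι (occPos ι i (s + 1)) = i :=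
  (occPos_succ_spec hi s).2

lemma occPos_succ_pos (hi : ∃ᶠ k in atTop, ι k = i) (s : ℕ) : 0 < occPos ι i (s + 1) :=
  (Nat.zero_le _).trans_lt (occPos_lt_succ hi s)

lemma occPos_succ_le {s k : ℕ} (hsk : occPos ι i s < k) (hk : ι k = i) :
    occPos ι i (s + 1) ≤ k :=
  Nat.sInf_le ⟨hsk, hk⟩

lemma kplus_occPos_succ (hi : ∃ᶠ k in atTop, ι k = i) (s : ℕ) :
    kplus ι (occPos ι i (s + 1)) = occPos ι i (s + 2) := by
  rw [kplus, apply_occPos_succ hi]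
  rfl

lemma firstOcc_eq_occPos_one (ι : ℕ → ℕ) (i : ℕ) : firstOcc ι i = occPos ι i 1 := rfl

lemma firstOcc_ne (hi : ∃ᶠ k in atTop, ι k = i) (hj : ∃ᶠ k in atTop, ι k = j) (hij : i ≠ j) :
    firstOcc ι i ≠ firstOcc ι j := by
  intro h
  rw [firstOcc_eq_occPos_one, firstOcc_eq_occPos_one] at h
  exact hij ((apply_occPos_succ hi 0).symm.trans ((congrArg ι h).trans (apply_occPos_succ hj 0)))

lemma pval_add_pval (hi : ∃ᶠ k in atTop, ι k = i) (hj : ∃ᶠ k in atTop, ι k = j) (hij : i ≠ j) :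
    pval ι i j + pval ι j i = 1 := by
  have hne := firstOcc_ne hi hj hij
  unfold pval
  split_ifs <;> omega

lemma Separates.occPos_add_lt_occPos_add (h : Separates ι i j) (hj : ∃ᶠ k in atTop, ι k = j)
    {a b : ℕ} (hab : occPos ι i a < occPos ι j (b + 1)) (s : ℕ) :
    occPos ι i (a + s) < occPos ι j (b + s + 1) := by
  induction s with
  | zero => exact hab
  | succ s ih =>
    obtain ⟨m, hm, hmi⟩ := h (occPos_succ_pos hj (b + s)) (occPos_lt_succ hj (b + s + 1))
      (apply_occPos_succ hj (b + s)) (apply_occPos_succ hj (b + s + 1))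
    rw [mem_Ioo] at hm
    exact (occPos_succ_le (ih.trans hm.1) hmi).trans_lt hm.2

lemma Separates.occPos_lt_occPos_succ (h : Separates ι i j) (hj : ∃ᶠ k in atTop, ι k = j)
    (s : ℕ) : occPos ι i s < occPos ι j (s + 1) := by
  simpa only [zero_add] using
    h.occPos_add_lt_occPos_add (a := 0) (b := 0) hj (occPos_succ_pos hj 0) s

lemma Separates.occPos_succ_lt_occPos_succ (h : Separates ι i j) (hj : ∃ᶠ k in atTop, ι k = j)
    (hfirst : firstOcc ι i < firstOcc ι j) (s : ℕ) :
    occPos ι i (s + 1) < occPos ι j (s + 1) := by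
  simpa only [zero_add, add_comm 1] using h.occPos_add_lt_occPos_add (a := 1) (b := 0) hj hfirst s

lemma occPos_add_pval_mem_Ioo (hsep : Separates ι i j) (hsep' : Separates ι j i)
    (hi : ∃ᶠ k in atTop, ι k = i) (hj : ∃ᶠ k in atTop, ι k = j) (hij : i ≠ j) (s : ℕ) :
    occPos ι j (s + 1 + pval ι j i) ∈ Ioo (occPos ι i (s + 1)) (occPos ι i (s + 2)) := by
  rw [mem_Ioo, pval]
  split_ifs with hfirst
  · exact ⟨hsep.occPos_lt_occPos_succ hj (s + 1),
      hsep'.occPos_succ_lt_occPos_succ hi hfirst (s + 1)⟩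
  · have hfirst' : firstOcc ι i < firstOcc ι j :=
      (not_lt.1 hfirst).lt_of_ne (firstOcc_ne hi hj hij)
    exact ⟨hsep.occPos_succ_lt_occPos_succ hj hfirst' s,
      hsep'.occPos_lt_occPos_succ hi (s + 1)⟩

lemma Separates.eq_of_mem_Ioo_occPos (h : Separates ι i j) {s k l : ℕ}
    (hk : k ∈ Ioo (occPos ι i s) (occPos ι i (s + 1))) (hιk : ι k = j)
    (hl : l ∈ Ioo (occPos ι i s) (occPos ι i (s + 1))) (hιl : ι l = j) : k = l := by
  wlog hkl : k < l generalizing k l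
  · exact (not_lt.1 hkl).eq_or_lt.elim Eq.symm fun hlk => (this hl hιl hk hιk hlk).symm
  rw [mem_Ioo] at hk hl
  obtain ⟨m, hm, hmi⟩ := h (Nat.one_le_of_lt hk.1) hkl hιk hιl
  rw [mem_Ioo] at hm
  exact absurd (occPos_succ_le (hk.1.trans hm.1) hmi) (hm.2.trans hl.2).not_ge

lemma filter_Ioo_occPos_eq_singleton (hsep : Separates ι i j) (hsep' : Separates ι j i)
    (hi : ∃ᶠ k in atTop, ι k = i) (hj : ∃ᶠ k in atTop, ι k = j) (hij : i ≠ j) (s : ℕ) :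
    {k ∈ Ioo (occPos ι i (s + 1)) (occPos ι i (s + 2)) | ι k = j} =
      {occPos ι j (s + 1 + pval ι j i)} := by
  have hmem := occPos_add_pval_mem_Ioo hsep hsep' hi hj hij s
  have hletter : ι (occPos ι j (s + 1 + pval ι j i)) = j := by
    rw [add_right_comm]
    exact apply_occPos_succ hj _
  refine Finset.eq_singleton_iff_unique_mem.2 ⟨mem_filter.2 ⟨hmem, hletter⟩, fun k hk => ?_⟩
  rw [mem_filter] at hk
  exact hsep.eq_of_mem_Ioo_occPos hk.1 hk.2 hmem hletter

end Occurrences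

section Beta

variable {n : ℕ} {ι : ℕ → ℕ} {A : ℕ → ℕ → ℤ} {i j : ℕ}

lemma Admissible.frequently_eq (h : Admissible n ι) (hi : i ∈ Icc 1 n) :
    ∃ᶠ k in atTop, ι k = i :=
  frequently_atTop.2 (h.2.2 i (mem_Icc.1 hi).1 (mem_Icc.1 hi).2)

lemma Admissible.apply_mem_erase_of_mem_Ioo (h : Admissible n ι) {s k : ℕ}
    (hk : k ∈ Ioo (occPos ι i s) (occPos ι i (s + 1))) : ι k ∈ (Icc 1 n).erase i := by
  rw [mem_Ioo] at hk
  exact mem_erase.2 ⟨fun hιk => hk.2.not_ge (occPos_succ_le hk.1 hιk),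
    mem_Icc.2 (h.1 k (Nat.one_le_of_lt hk.1))⟩

lemma sum_Ioo_occPos_smul_xc (hadm : Admissible n ι) (hadap : Adapted n A ι) (hi : i ∈ Icc 1 n)
    (s : ℕ) :
    ∑ k ∈ Ioo (occPos ι i (s + 1)) (occPos ι i (s + 2)), (A i (ι k) : ℚ) • xc k =
      ∑ j ∈ (Icc 1 n).erase i, (A i j : ℚ) • xc (occPos ι j (s + 1 + pval ι j i)) := by
  rw [← sum_fiberwise_of_maps_to fun k hk => hadm.apply_mem_erase_of_mem_Ioo hk]
  refine sum_congr rfl fun j hj => ?_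
  obtain ⟨hji, hj⟩ := mem_erase.1 hj
  have factor : ∑ k ∈ Ioo (occPos ι i (s + 1)) (occPos ι i (s + 2)) with ι k = j,
      (A i (ι k) : ℚ) • xc k =
        (A i j : ℚ) • ∑ k ∈ Ioo (occPos ι i (s + 1)) (occPos ι i (s + 2)) with ι k = j, xc k := by
    rw [smul_sum]
    exact sum_congr rfl fun k hk => by rw [(mem_filter.1 hk).2]
  rw [factor]
  by_cases hA : A i j = 0
  · simp only [hA, Int.cast_zero, zero_smul]
  · obtain ⟨hsep, hsep'⟩ := hadap.separates hi hj hji.symm hA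
    rw [filter_Ioo_occPos_eq_singleton hsep hsep' (hadm.frequently_eq hi) (hadm.frequently_eq hj)
      hji.symm, sum_singleton]

lemma xsj_natCast {s : ℕ} (hs : 1 ≤ s) (hj : j ∈ Icc 1 n) : xsj ι n s j = xc (occPos ι j s) :=
  if_pos ⟨by exact_mod_cast hs, mem_Icc.1 hj⟩

lemma xsj_eq_zero (hj : j ∉ Icc 1 n) (s : ℤ) : xsj ι n s j = 0 :=
  if_neg fun h => hj (mem_Icc.2 h.2)

lemma betasj_eq_sum (hadm : Admissible n ι) (hadap : Adapted n A ι) (hi : i ∈ Icc 1 n) {s : ℤ}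
    (hs : 1 ≤ s) :
    betasj A ι s i = xsj ι n s i + xsj ι n (s + 1) i +
      ∑ j ∈ (Icc 1 n).erase i, (A i j : ℚ) • xsj ι n (s + pval ι j i) j := by
  have hfreq := hadm.frequently_eq hi
  obtain ⟨t, rfl⟩ := Int.le.dest hs
  have hsum : ∑ j ∈ (Icc 1 n).erase i, (A i j : ℚ) • xsj ι n (1 + t + pval ι j i) j =
      ∑ j ∈ (Icc 1 n).erase i, (A i j : ℚ) • xc (occPos ι j (t + 1 + pval ι j i)) :=
    sum_congr rfl fun j hj => by
      rw [← xsj_natCast (n := n) (by omega) (mem_of_mem_erase hj)]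
      push_cast
      rw [add_comm (1 : ℤ)]
  have hs₁ : (1 + t : ℤ) = (t + 1 : ℕ) := by push_cast; ring
  have hs₂ : (1 + t + 1 : ℤ) = (t + 2 : ℕ) := by push_cast; ring
  rw [hsum, hs₂, hs₁, xsj_natCast (by omega) hi, xsj_natCast (by omega) hi, betasj,
    Int.toNat_natCast, beta, if_neg (occPos_succ_pos hfreq t).ne', kplus_occPos_succ hfreq,
    apply_occPos_succ hfreq, sum_Ioo_occPos_smul_xc hadm hadap hi]
  abel

end Beta

section AlignedCoordinates

variable {n : ℕ} {ι : ℕ → ℕ} {A : ℕ → ℕ → ℤ} {j : ℕ}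

/-- The coordinate `x_{m+P(j), j}`. The shift by `P(j)` absorbs the dependence on the order of first
occurrences: the neighbours of the letter `j` contributing to `β_{m+P(j), j}` are always
`alignedX ι n (m + 1) (j - 1)` and `alignedX ι n m (j + 1)`. -/
noncomputable def alignedX (ι : ℕ → ℕ) (n : ℕ) (m : ℤ) (j : ℕ) : ℕ → ℚ :=
  xsj ι n (m + PABC ι n j) j

lemma alignedX_eq_zero (hj : j ∉ Icc 1 n) (m : ℤ) : alignedX ι n m j = 0 :=
  xsj_eq_zero hj _

lemma PABC_succ (ι : ℕ → ℕ) (hj : 1 ≤ j) (hjn : j < n) :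
    PABC ι n (j + 1) = PABC ι n j + pval ι (j + 1) j := by
  rw [PABC, PABC, if_pos (Nat.succ_le_of_lt hjn), if_pos hjn.le, sum_Icc_succ_top (by omega),
    Nat.add_sub_cancel]

lemma xsj_add_pval_succ (hj : 1 ≤ j) (m : ℤ) :
    xsj ι n (m + PABC ι n j + pval ι (j + 1) j) (j + 1) = alignedX ι n m (j + 1) := by
  by_cases hjn : j < n
  · rw [alignedX, PABC_succ ι hj hjn, Nat.cast_add, add_assoc]
  · have hout : j + 1 ∉ Icc 1 n := by simp only [mem_Icc]; omega
    rw [xsj_eq_zero hout, alignedX_eq_zero hout]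

lemma xsj_add_pval_pred (hadm : Admissible n ι) (hj : j ∈ Icc 1 n) (m : ℤ) :
    xsj ι n (m + PABC ι n j + pval ι (j - 1) j) (j - 1) = alignedX ι n (m + 1) (j - 1) := by
  by_cases hpred : j - 1 ∈ Icc 1 n
  · have hP := PABC_succ (n := n) (j := j - 1) ι (mem_Icc.1 hpred).1
      (by simp only [mem_Icc] at hj hpred; omega)
    have hp := pval_add_pval (hadm.frequently_eq hpred) (hadm.frequently_eq hj)
      (by simp only [mem_Icc] at hj; omega)
    rw [Nat.sub_add_cancel (mem_Icc.1 hj).1] at hP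
    rw [alignedX]
    congr 1
    omega
  · rw [xsj_eq_zero hpred, alignedX_eq_zero hpred]

lemma betasj_add_PABC_of_tridiagonal (hadm : Admissible n ι) (hadap : Adapted n A ι)
    (hj : j ∈ Icc 1 n) (hA : ∀ i, i ≠ j → i + 1 ≠ j → i ≠ j + 1 → A j i = 0) {m : ℤ}
    (hm : 1 ≤ m + PABC ι n j) :
    betasj A ι (m + PABC ι n j) j = alignedX ι n m j + alignedX ι n (m + 1) j +
      ((A j (j - 1) : ℚ) • alignedX ι n (m + 1) (j - 1) +
        (A j (j + 1) : ℚ) • alignedX ι n m (j + 1)) := by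
  have hj' := mem_Icc.1 hj
  rw [betasj_eq_sum hadm hadap hj hm, ← xsj_add_pval_pred hadm hj, ← xsj_add_pval_succ hj'.1,
    alignedX, alignedX, add_right_comm m]
  congr 1
  refine sum_eq_add (j - 1) (j + 1) (by omega) (fun i hi hne => ?_) (fun hout => ?_)
    (fun hout => ?_)
  · rw [hA i (ne_of_mem_erase hi) (by omega) hne.2, Int.cast_zero, zero_smul]
  · rw [xsj_eq_zero (fun h => hout (mem_erase.2 ⟨by omega, h⟩)), smul_zero]
  · rw [xsj_eq_zero (fun h => hout (mem_erase.2 ⟨by omega, h⟩)), smul_zero]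

end AlignedCoordinates

section TypeC

variable {n : ℕ} {ι : ℕ → ℕ} {j : ℕ}

lemma cartanC_eq_zero {i : ℕ} (hij : i ≠ j) (hpred : i + 1 ≠ j) (hsucc : i ≠ j + 1) :
    cartanC n j i = 0 := by
  unfold cartanC
  split_ifs <;> omega

lemma cartanC_pred (hj : 1 ≤ j) : cartanC n j (j - 1) = -1 := by
  unfold cartanC
  split_ifs <;> omega

lemma cartanC_succ_of_ne (hj : j + 1 ≠ n) : cartanC n j (j + 1) = -1 := by
  unfold cartanC
  split_ifs <;> omega

lemma cartanC_succ_of_eq (hj : j + 1 = n) : cartanC n j (j + 1) = -2 := by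
  unfold cartanC
  split_ifs <;> omega

lemma betasj_cartanC (hadm : Admissible n ι) (hadap : Adapted n (cartanC n) ι)
    (hj : j ∈ Icc 1 n) {m : ℤ} (hm : 1 ≤ m + PABC ι n j) :
    betasj (cartanC n) ι (m + PABC ι n j) j =
      alignedX ι n m j + alignedX ι n (m + 1) j - alignedX ι n (m + 1) (j - 1) +
        (cartanC n j (j + 1) : ℚ) • alignedX ι n m (j + 1) := by
  rw [betasj_add_PABC_of_tridiagonal hadm hadap hj (fun i => cartanC_eq_zero) hm,
    cartanC_pred (mem_Icc.1 hj).1]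
  push_cast
  module

lemma betasj_cartanC_last (hadm : Admissible n ι) (hadap : Adapted n (cartanC n) ι) (hn : 1 ≤ n)
    {m : ℤ} (hm : 1 ≤ m + PABC ι n n) :
    betasj (cartanC n) ι (m + PABC ι n n) n =
      alignedX ι n m n + alignedX ι n (m + 1) n - alignedX ι n (m + 1) (n - 1) := by
  rw [betasj_cartanC hadm hadap (right_mem_Icc.2 hn) hm,
    alignedX_eq_zero (fun h => n.not_succ_le_self (mem_Icc.1 h).2), smul_zero, add_zero]

lemma boxC_zero (s : ℤ) : boxC ι n s 0 = alignedX ι n s n :=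
  if_pos rfl

lemma boxC_of_lt (hj : 1 ≤ j) (hjn : j < n) (s : ℤ) :
    boxC ι n s j = alignedX ι n s j - alignedX ι n (s + 1) (j - 1) := by
  rw [boxC, if_neg (by omega), if_pos hjn, alignedX, alignedX, add_right_comm s]

lemma boxC_last (hn : 1 ≤ n) (s : ℤ) :
    boxC ι n s n = (2 : ℚ) • alignedX ι n s n - alignedX ι n (s + 1) (n - 1) := by
  rw [boxC, if_neg (by omega), if_neg (by omega), if_pos rfl, alignedX, alignedX,
    add_right_comm s]

lemma boxC_bar_last (s : ℤ) :
    boxC ι n s (n + 1) =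
      alignedX ι n (s + 1) (n - 1) - (2 : ℚ) • alignedX ι n (s + 1) n := by
  rw [boxC, if_neg (by omega), if_neg (by omega), if_neg (by omega), if_pos rfl, alignedX,
    alignedX, add_right_comm s _ 1, add_right_comm s _ 1]

lemma boxC_bar_of_lt (hjn : j < n) (s : ℤ) :
    boxC ι n s (2 * n + 1 - j) =
      alignedX ι n (s + n - j + 1) (j - 1) - alignedX ι n (s + n - j + 1) j := by
  rw [boxC, if_neg (by omega), if_neg (by omega), if_neg (by omega), if_neg (by omega), alignedX,
    alignedX, show 2 * n - (2 * n + 1 - j) = j - 1 by omega,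
    show 2 * n + 1 - (2 * n + 1 - j) = j by omega]
  congr 2 <;> ring

lemma boxC_succ (hjn : j < n) (s : ℤ) :
    boxC ι n s (j + 1) =
      -(cartanC n j (j + 1) : ℚ) • alignedX ι n s (j + 1) - alignedX ι n (s + 1) j := by
  obtain hlt | rfl : j + 1 < n ∨ n = j + 1 := by omega
  · rw [boxC_of_lt (by omega) hlt, cartanC_succ_of_ne hlt.ne, Nat.add_sub_cancel]
    push_cast
    module
  · rw [boxC_last (by omega), cartanC_succ_of_eq rfl, Nat.add_sub_cancel]
    push_cast
    module

lemma boxC_bar_succ (hjn : j < n) (s : ℤ) :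
    boxC ι n s (2 * n - j) =
      alignedX ι n (s + n - j) j +
        (cartanC n j (j + 1) : ℚ) • alignedX ι n (s + n - j) (j + 1) := by
  obtain hlt | rfl : j + 1 < n ∨ n = j + 1 := by omega
  · have hbar := boxC_bar_of_lt (ι := ι) hlt s
    rw [Nat.add_sub_add_right, Nat.add_sub_cancel] at hbar
    rw [hbar, cartanC_succ_of_ne hlt.ne,
      show s + n - (j + 1 : ℕ) + 1 = s + n - j by push_cast; ring]
    push_cast
    module
  · rw [show 2 * (j + 1) - j = j + 1 + 1 by omega, boxC_bar_last, cartanC_succ_of_eq rfl,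
      Nat.add_sub_cancel, show s + (j + 1 : ℕ) - j = s + 1 by push_cast; ring]
    push_cast
    module

end TypeC

/-- Lemma 3.3 (iii): the type C box relations (barred entries `j̄` are encoded as `2n+1-j`,
and `ovl(n+1)` as `0`). -/
theorem boxC_rel (n : ℕ) (hn : 2 ≤ n) (ι : ℕ → ℕ)
    (hadm : Admissible n ι) (hadap : Adapted n (cartanC n) ι) :
    (∀ (j : ℕ) (s : ℤ), 1 ≤ j → j ≤ n - 1 → 1 - (PABC ι n j : ℤ) ≤ s →
      boxC ι n s (j + 1) =
        boxC ι n s j - betasj (cartanC n) ι (s + (PABC ι n j : ℤ)) j) ∧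
    (∀ s : ℤ, 1 - (PABC ι n n : ℤ) ≤ s →
      boxC ι n s (n + 1) =
        boxC ι n s n - (2 : ℚ) • betasj (cartanC n) ι (s + (PABC ι n n : ℤ)) n) ∧
    (∀ (j : ℕ) (s : ℤ), 2 ≤ j → j ≤ n → (j : ℤ) - (PABC ι n (j - 1) : ℤ) - (n : ℤ) ≤ s →
      boxC ι n s (2 * n + 2 - j) =
        boxC ι n s (2 * n + 1 - j)
          - betasj (cartanC n) ι
              (s + (PABC ι n (j - 1) : ℤ) + (n : ℤ) - (j : ℤ) + 1) (j - 1)) ∧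
    (∀ l : ℤ, 1 - (PABC ι n n : ℤ) ≤ l →
      boxC ι n (l + 1) 0 + boxC ι n l (n + 1) =
        boxC ι n l 0 - betasj (cartanC n) ι (l + (PABC ι n n : ℤ)) n) := by
  have hn' : 1 ≤ n := by omega
  refine ⟨fun j s hj hjn hs => ?_, fun s hs => ?_, fun j s hj hjn hs => ?_, fun l hl => ?_⟩
  · have hjn' : j < n := by omega
    rw [boxC_succ hjn', boxC_of_lt hj hjn',
      betasj_cartanC hadm hadap (mem_Icc.2 ⟨hj, hjn'.le⟩) (by omega)]
    module
  · rw [boxC_bar_last, boxC_last hn', betasj_cartanC_last hadm hadap hn' (by omega)]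
    module
  · obtain ⟨i, rfl⟩ : ∃ i, j = i + 1 := ⟨j - 1, by omega⟩
    rw [Nat.add_sub_cancel] at hs ⊢
    have hindex : s + PABC ι n i + n - (i + 1 : ℕ) + 1 = s + n - i + PABC ι n i := by
      push_cast; ring
    rw [hindex, betasj_cartanC hadm hadap (mem_Icc.2 ⟨by omega, by omega⟩) (by omega),
      show 2 * n + 2 - (i + 1) = 2 * n + 1 - i by omega, Nat.add_sub_add_right,
      boxC_bar_succ hjn, boxC_bar_of_lt hjn]
    module
  · rw [boxC_zero, boxC_zero, boxC_bar_last, betasj_cartanC_last hadm hadap hn' (by omega)]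
    module
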